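/- arXiv:math/0605533 — 2 statements merged into one kernel-verified Lean document; each statement's English description precedes it below -/
import Mathlib

section
/- There exist constants c₁, c₂ > 0, depending only on d and α, such that c₁ |ξ|^α ≤ ψ(ξ) ≤ c₂ |ξ|^α for every ξ ∈ ℝ^d with |ξ| ≥ 1; i.e. the truncated stable characteristic exponent ψ behaves like |ξ|^α near infinity. -/
open MeasureTheory

/-- The constant `A(d, -α) = α 2^{α-1} π^{-d/2} Γ((d+α)/2) / Γ(1-α/2)`. -/
noncomputable def stableA (d : ℕ) (α : ℝ) : ℝ :=
  α * (2 : ℝ) ^ (α - 1) * Real.pi ^ (-(d : ℝ) / 2) * Real.Gamma (((d : ℝ) + α) / 2) /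
    Real.Gamma (1 - α / 2)

/-- The truncated stable characteristic exponent
`ψ(ξ) = A(d,-α) ∫_{|y|<1} (1 - cos(ξ·y)) |y|^{-d-α} dy`. -/
noncomputable def truncPsi (d : ℕ) (α : ℝ) (ξ : EuclideanSpace ℝ (Fin d)) : ℝ :=
  stableA d α *
    ∫ y in Metric.ball (0 : EuclideanSpace ℝ (Fin d)) 1,
      (1 - Real.cos (inner ℝ ξ y)) * ‖y‖ ^ (-(d : ℝ) - α)


lemma stableA_pos (d : ℕ) (α : ℝ) (hα : 0 < α) (hα2 : α < 2) : 0 < stableA d α := by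
  unfold stableA
  have h1 : 0 < Real.Gamma (((d : ℝ) + α) / 2) := Real.Gamma_pos_of_pos (by positivity)
  have h2 : 0 < Real.Gamma (1 - α / 2) := Real.Gamma_pos_of_pos (by linarith)
  have h3 := Real.pi_pos
  positivity

/-- The radial majorant. -/
noncomputable def majorant (d : ℕ) (α : ℝ) (r : ℝ) : ℝ :=
  min 2 (r ^ 2 / 2) * r ^ (-(d : ℝ) - α)

lemma majorant_nonneg (d : ℕ) (α : ℝ) {r : ℝ} (hr : 0 ≤ r) : 0 ≤ majorant d α r := by
  unfold majorant
  positivity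

lemma majorant_measurable (d : ℕ) (α : ℝ) : Measurable (majorant d α) := by
  unfold majorant
  fun_prop

lemma pow_mul_rpow_aux (d : ℕ) (hd : 2 ≤ d) (α : ℝ) {r : ℝ} (hr : 0 < r) :
    r ^ (d - 1) * r ^ (-(d : ℝ) - α) = r ^ (-1 - α) := by
  rw [← Real.rpow_natCast, ← Real.rpow_add hr, Nat.cast_sub (by omega)]
  congr 1
  push_cast
  ring

lemma majorant_integrable (d : ℕ) (hd : 2 ≤ d) (α : ℝ) (hα : 0 < α) (hα2 : α < 2) :
    Integrable (fun y : EuclideanSpace ℝ (Fin d) => majorant d α ‖y‖) := by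
  have : Nontrivial (EuclideanSpace ℝ (Fin d)) := by
    apply Module.nontrivial_of_finrank_pos (R := ℝ)
    rw [finrank_euclideanSpace_fin]; omega
  rw [MeasureTheory.integrable_fun_norm_addHaar volume (f := majorant d α), finrank_euclideanSpace_fin,
    ← Set.Ioc_union_Ioi_eq_Ioi (zero_le_one (α := ℝ))]
  have hm : Measurable (fun y : ℝ => y ^ (d - 1) • majorant d α y) := by
    have := majorant_measurable d α
    simp only [smul_eq_mul]
    fun_prop
  refine IntegrableOn.union ?_ ?_
  · have h := (intervalIntegral.intervalIntegrable_rpow' (a := 0) (b := 1) (r := 1 - α)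
      (by linarith)).1
    refine Integrable.mono' h hm.aestronglyMeasurable ?_
    refine (ae_restrict_iff' measurableSet_Ioc).2 (Filter.Eventually.of_forall ?_)
    rintro r ⟨hr, -⟩
    have h0 := majorant_nonneg d α hr.le
    rw [Real.norm_of_nonneg (by rw [smul_eq_mul]; positivity)]
    have e : r ^ (1 - α) = r ^ 2 * r ^ (-1 - α) := by
      rw [← Real.rpow_natCast, ← Real.rpow_add hr]
      congr 1
      push_cast
      ring
    rw [e, ← pow_mul_rpow_aux d hd α hr, smul_eq_mul, majorant]
    have h1 : min 2 (r ^ 2 / 2) ≤ r ^ 2 := (min_le_right _ _).trans (by nlinarith)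
    calc _ = min 2 (r ^ 2 / 2) * (r ^ (d - 1) * r ^ (-(d : ℝ) - α)) := by ring
      _ ≤ _ := by gcongr
  · have h := (integrableOn_Ioi_rpow_of_lt (a := -1 - α) (by linarith) one_pos).const_mul 2
    refine Integrable.mono' h hm.aestronglyMeasurable ?_
    refine (ae_restrict_iff' measurableSet_Ioi).2 (Filter.Eventually.of_forall ?_)
    intro r hr1
    have hr : 0 < r := one_pos.trans hr1
    have h0 := majorant_nonneg d α hr.le
    rw [Real.norm_of_nonneg (by rw [smul_eq_mul]; positivity)]
    rw [← pow_mul_rpow_aux d hd α hr, smul_eq_mul, majorant]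
    have h1 : min 2 (r ^ 2 / 2) ≤ 2 := (min_le_left _ _)
    calc _ = min 2 (r ^ 2 / 2) * (r ^ (d - 1) * r ^ (-(d : ℝ) - α)) := by ring
      _ ≤ _ := by gcongr

/-- The integrand is dominated by the rescaled majorant. -/
lemma integrand_le (d : ℕ) (α : ℝ) (ξ y : EuclideanSpace ℝ (Fin d)) (hξ : 0 < ‖ξ‖) :
    (1 - Real.cos (inner ℝ ξ y)) * ‖y‖ ^ (-(d : ℝ) - α) ≤
      ‖ξ‖ ^ ((d : ℝ) + α) * majorant d α ‖‖ξ‖ • y‖ := by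
  have e : ‖ξ‖ ^ ((d : ℝ) + α) * majorant d α ‖‖ξ‖ • y‖ =
      min 2 ((‖ξ‖ * ‖y‖) ^ 2 / 2) * ‖y‖ ^ (-(d : ℝ) - α) := by
    rw [majorant, norm_smul, norm_norm, Real.mul_rpow hξ.le (norm_nonneg y)]
    have : ‖ξ‖ ^ ((d : ℝ) + α) * ‖ξ‖ ^ (-(d : ℝ) - α) = 1 := by
      rw [← Real.rpow_add hξ]
      ring_nf
      simp
    linear_combination (min 2 ((‖ξ‖ * ‖y‖) ^ 2 / 2) * ‖y‖ ^ (-(d : ℝ) - α)) * this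
  rw [e]
  gcongr
  refine le_min ?_ ?_
  · linarith [Real.neg_one_le_cos (inner ℝ ξ y)]
  · have h1 := Real.one_sub_sq_div_two_le_cos (x := inner ℝ ξ y)
    have h2 : (inner ℝ ξ y) ^ 2 ≤ (‖ξ‖ * ‖y‖) ^ 2 := by
      rw [← sq_abs]
      exact pow_le_pow_left₀ (abs_nonneg _) (abs_real_inner_le_norm ξ y) 2
    linarith

lemma integrand_nonneg (d : ℕ) (α : ℝ) (ξ y : EuclideanSpace ℝ (Fin d)) :
    0 ≤ (1 - Real.cos (inner ℝ ξ y)) * ‖y‖ ^ (-(d : ℝ) - α) := by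
  have := Real.cos_le_one (inner ℝ ξ y)
  exact mul_nonneg (by linarith) (by positivity)

lemma rescaled_integrable (d : ℕ) (hd : 2 ≤ d) (α : ℝ) (hα : 0 < α) (hα2 : α < 2)
    (ξ : EuclideanSpace ℝ (Fin d)) (hξ : 0 < ‖ξ‖) :
    Integrable (fun y : EuclideanSpace ℝ (Fin d) =>
      ‖ξ‖ ^ ((d : ℝ) + α) * majorant d α ‖‖ξ‖ • y‖) :=
  ((integrable_comp_smul_iff volume (fun y : EuclideanSpace ℝ (Fin d) => majorant d α ‖y‖)
    hξ.ne').2 (majorant_integrable d hd α hα hα2)).const_mul _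

lemma integrand_integrable (d : ℕ) (hd : 2 ≤ d) (α : ℝ) (hα : 0 < α) (hα2 : α < 2)
    (ξ : EuclideanSpace ℝ (Fin d)) (hξ : 0 < ‖ξ‖) :
    Integrable (fun y : EuclideanSpace ℝ (Fin d) =>
      (1 - Real.cos (inner ℝ ξ y)) * ‖y‖ ^ (-(d : ℝ) - α)) := by
  refine (rescaled_integrable d hd α hα hα2 ξ hξ).mono' ?_ ?_
  · have : Measurable (fun y : EuclideanSpace ℝ (Fin d) =>
      (1 - Real.cos (inner ℝ ξ y)) * ‖y‖ ^ (-(d : ℝ) - α)) := by fun_prop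
    exact this.aestronglyMeasurable
  · refine Filter.Eventually.of_forall fun y => ?_
    rw [Real.norm_of_nonneg (integrand_nonneg d α ξ y)]
    exact integrand_le d α ξ y hξ

lemma integral_upper (d : ℕ) (hd : 2 ≤ d) (α : ℝ) (hα : 0 < α) (hα2 : α < 2)
    (ξ : EuclideanSpace ℝ (Fin d)) (hξ : 0 < ‖ξ‖) :
    ∫ y in Metric.ball (0 : EuclideanSpace ℝ (Fin d)) 1,
      (1 - Real.cos (inner ℝ ξ y)) * ‖y‖ ^ (-(d : ℝ) - α) ≤
    (∫ y : EuclideanSpace ℝ (Fin d), majorant d α ‖y‖) * ‖ξ‖ ^ α := by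
  have hi := integrand_integrable d hd α hα hα2 ξ hξ
  refine (setIntegral_le_integral hi
    (Filter.Eventually.of_forall (integrand_nonneg d α ξ))).trans ?_
  refine (integral_mono hi (rescaled_integrable d hd α hα hα2 ξ hξ)
    (fun y => integrand_le d α ξ y hξ)).trans (le_of_eq ?_)
  rw [integral_const_mul, Measure.integral_comp_smul volume
    (fun y : EuclideanSpace ℝ (Fin d) => majorant d α ‖y‖), finrank_euclideanSpace_fin,
    abs_of_pos (by positivity), Real.rpow_add hξ, Real.rpow_natCast, smul_eq_mul]
  field_simp

lemma integral_lower (d : ℕ) (hd : 2 ≤ d) (α : ℝ) (hα : 0 < α) (hα2 : α < 2)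
    (ξ : EuclideanSpace ℝ (Fin d)) (hξ : 1 ≤ ‖ξ‖) :
    ((1 - Real.cos (1 / 4)) * (1 / 4) ^ d *
      volume.real (Metric.ball (0 : EuclideanSpace ℝ (Fin d)) 1)) * ‖ξ‖ ^ α ≤
    ∫ y in Metric.ball (0 : EuclideanSpace ℝ (Fin d)) 1,
      (1 - Real.cos (inner ℝ ξ y)) * ‖y‖ ^ (-(d : ℝ) - α) := by
  have hR : 0 < ‖ξ‖ := one_pos.trans_le hξ
  have hi := integrand_integrable d hd α hα hα2 ξ hR
  set R := ‖ξ‖ with hRdef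
  set c : EuclideanSpace ℝ (Fin d) := (1 / (2 * R ^ 2)) • ξ with hc
  have hcn : ‖c‖ = 1 / (2 * R) := by
    rw [hc, norm_smul, Real.norm_of_nonneg (by positivity), ← hRdef]
    field_simp
  have hci : inner ℝ ξ c = 1 / 2 := by
    rw [hc, inner_smul_right, real_inner_self_eq_norm_sq, ← hRdef]
    field_simp
  have key : ∀ y ∈ Metric.ball c (1 / (4 * R)), ‖y‖ < 1 / R ∧
      1 / 4 ≤ inner ℝ ξ y ∧ inner ℝ ξ y ≤ 1 := by
    intro y hy
    rw [Metric.mem_ball, dist_eq_norm] at hy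
    have h1 : inner ℝ ξ y = 1 / 2 + inner ℝ ξ (y - c) := by
      rw [inner_sub_right, hci]; ring
    have h2 : |inner ℝ ξ (y - c)| ≤ 1 / 4 := by
      refine (abs_real_inner_le_norm ξ (y - c)).trans ?_
      calc ‖ξ‖ * ‖y - c‖ ≤ R * (1 / (4 * R)) := by gcongr
        _ = 1 / 4 := by field_simp
    have h3 := abs_le.1 h2
    refine ⟨?_, by linarith, by linarith⟩
    have h4 : ‖y‖ ≤ ‖y - c‖ + ‖c‖ := by
      simpa using norm_add_le (y - c) c
    have h5 : 1 / (4 * R) + 1 / (2 * R) < 1 / R := by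
      have : 0 < 1 / R := by positivity
      have e : 1 / (4 * R) + 1 / (2 * R) = 3 / 4 * (1 / R) := by
        field_simp
        norm_num
      rw [e]; linarith
    linarith
  have hsub : Metric.ball c (1 / (4 * R)) ⊆ Metric.ball 0 1 := by
    intro y hy
    rw [mem_ball_zero_iff]
    refine (key y hy).1.trans_le ?_
    rw [div_le_one hR]
    exact hξ
  refine le_trans ?_ (setIntegral_mono_set hi.integrableOn
    (Filter.Eventually.of_forall (integrand_nonneg d α ξ)) hsub.eventuallyLE)
  have hlow := setIntegral_ge_of_const_le_real (μ := volume)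
    (c := (1 - Real.cos (1 / 4)) * R ^ ((d : ℝ) + α))
    (f := fun y : EuclideanSpace ℝ (Fin d) =>
      (1 - Real.cos (inner ℝ ξ y)) * ‖y‖ ^ (-(d : ℝ) - α))
    (s := Metric.ball c (1 / (4 * R))) Metric.isOpen_ball.measurableSet
    measure_ball_lt_top.ne ?_ hi.integrableOn
  · refine le_trans (le_of_eq ?_) hlow
    have : Nontrivial (EuclideanSpace ℝ (Fin d)) := by
      apply Module.nontrivial_of_finrank_pos (R := ℝ)
      rw [finrank_euclideanSpace_fin]; omega
    rw [measureReal_def, measureReal_def, Measure.addHaar_ball volume c (by positivity),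
      ENNReal.toReal_mul, ENNReal.toReal_ofReal (by positivity), finrank_euclideanSpace_fin,
      Real.rpow_add hR, Real.rpow_natCast]
    have e : R ^ d * (1 / (4 * R)) ^ d = (1 / 4) ^ d := by
      rw [← mul_pow]
      congr 1
      field_simp
    rw [← e]
    ring
  · intro y hy
    obtain ⟨h1, h2, h3⟩ := key y hy
    have hcos : Real.cos (inner ℝ ξ y) ≤ Real.cos (1 / 4) :=
      Real.cos_le_cos_of_nonneg_of_le_pi (by norm_num) (by linarith [Real.pi_gt_three]) h2
    have hc1 := Real.cos_le_one (1 / 4)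
    have hy0 : 0 < ‖y‖ := by
      rw [norm_pos_iff]
      rintro rfl
      rw [inner_zero_right] at h2
      norm_num at h2
    have hpow : R ^ ((d : ℝ) + α) ≤ ‖y‖ ^ (-(d : ℝ) - α) := by
      have e : R ^ ((d : ℝ) + α) = (1 / R) ^ (-(d : ℝ) - α) := by
        rw [one_div, Real.inv_rpow hR.le, ← Real.rpow_neg hR.le]
        congr 1; ring
      rw [e]
      exact Real.rpow_le_rpow_of_nonpos hy0 h1.le (by linarith [(Nat.cast_nonneg d : (0:ℝ) ≤ d)])
    exact mul_le_mul (by linarith) hpow (by positivity) (by linarith)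

/-- `ψ(ξ)` is comparable to `|ξ|^α` for `|ξ| ≥ 1`, with constants
depending only on `d` and `α`. -/
theorem statement3 (d : ℕ) (hd : 2 ≤ d) (α : ℝ) (hα : 0 < α) (hα2 : α < 2) :
    ∃ c₁ c₂ : ℝ, 0 < c₁ ∧ 0 < c₂ ∧
      ∀ ξ : EuclideanSpace ℝ (Fin d), 1 ≤ ‖ξ‖ →
        c₁ * ‖ξ‖ ^ α ≤ truncPsi d α ξ ∧ truncPsi d α ξ ≤ c₂ * ‖ξ‖ ^ α := by
  have hA := stableA_pos d α hα hα2
  have hk : 0 < 1 - Real.cos (1 / 4) := by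
    have := Real.cos_lt_cos_of_nonneg_of_le_pi (x := 0) (y := 1 / 4) le_rfl
      (by linarith [Real.pi_gt_three]) (by norm_num)
    rw [Real.cos_zero] at this
    linarith
  have hV : 0 < volume.real (Metric.ball (0 : EuclideanSpace ℝ (Fin d)) 1) :=
    ENNReal.toReal_pos (Metric.measure_ball_pos _ _ one_pos).ne' measure_ball_lt_top.ne
  have hI : 0 ≤ ∫ y : EuclideanSpace ℝ (Fin d), majorant d α ‖y‖ :=
    integral_nonneg fun y => majorant_nonneg d α (norm_nonneg y)
  refine ⟨stableA d α * ((1 - Real.cos (1 / 4)) * (1 / 4) ^ d *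
      volume.real (Metric.ball (0 : EuclideanSpace ℝ (Fin d)) 1)),
    stableA d α * ((∫ y : EuclideanSpace ℝ (Fin d), majorant d α ‖y‖) + 1),
    by positivity, by positivity, fun ξ hξ => ⟨?_, ?_⟩⟩
  · rw [truncPsi, mul_assoc]
    exact mul_le_mul_of_nonneg_left (integral_lower d hd α hα hα2 ξ hξ) hA.le
  · rw [truncPsi, mul_assoc]
    refine mul_le_mul_of_nonneg_left ?_ hA.le
    refine (integral_upper d hd α hα hα2 ξ (one_pos.trans_le hξ)).trans ?_
    gcongr
    linarith
end

section
/- For every unit vector e ∈ ℝ^d, the integral I := ∫_{ℝ^d} (1 − cos(e·x)) |x|^{−d−α} dx is finite, strictly positive, and independent of the unit vector e; moreover ψ(ξ)/|ξ|^α converges to A(d,−α)·I as |ξ| → ∞. -/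
open MeasureTheory

/-- The radial dominating function is integrable. -/
lemma aux_radial (d : ℕ) (hd : 2 ≤ d) (α : ℝ) (hα : 0 < α) (hα2 : α < 2) :
    Integrable (fun x : EuclideanSpace ℝ (Fin d) =>
      (fun r : ℝ => min (r ^ 2 / 2) 2 * r ^ (-(d : ℝ) - α)) ‖x‖) volume := by
  have : Nontrivial (EuclideanSpace ℝ (Fin d)) := by
    have : Nonempty (Fin d) := ⟨⟨0, by omega⟩⟩
    infer_instance
  refine (integrable_fun_norm_addHaar (volume : Measure (EuclideanSpace ℝ (Fin d)))
    (f := fun r : ℝ => min (r ^ 2 / 2) 2 * r ^ (-(d : ℝ) - α))).2 ?_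
  rw [finrank_euclideanSpace_fin]
  have key : ∀ r : ℝ, 0 < r → (r ^ (d - 1)) * r ^ (-(d : ℝ) - α) = r ^ (-1 - α) := by
    intro r hr
    rw [← Real.rpow_natCast, ← Real.rpow_add hr, Nat.cast_sub (by omega)]
    congr 1
    push_cast
    ring
  have hmeas : Measurable (fun y : ℝ => y ^ (d - 1) • (min (y ^ 2 / 2) 2 * y ^ (-(d : ℝ) - α))) := by
    fun_prop
  rw [← Set.Ioc_union_Ioi_eq_Ioi (zero_le_one (α := ℝ))]
  refine IntegrableOn.union ?_ ?_
  · have h1 : IntegrableOn (fun r : ℝ => r ^ (1 - α)) (Set.Ioc 0 1) := by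
      have := intervalIntegral.intervalIntegrable_rpow' (a := 0) (b := 1) (r := 1 - α) (by linarith)
      exact (intervalIntegrable_iff_integrableOn_Ioc_of_le zero_le_one).1 this
    refine Integrable.mono' h1 hmeas.aestronglyMeasurable ?_
    refine (ae_restrict_iff' measurableSet_Ioc).2 (.of_forall fun r hr => ?_)
    have hr0 : 0 < r := hr.1
    have : r ^ (d - 1) • (min (r ^ 2 / 2) 2 * r ^ (-(d : ℝ) - α))
        = min (r ^ 2 / 2) 2 * r ^ (-1 - α) := by
      rw [← key r hr0, smul_eq_mul]; ring
    rw [this, Real.norm_of_nonneg (by positivity)]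
    have h2 : r ^ (1 - α) = r ^ 2 * r ^ (-1 - α) := by
      rw [← Real.rpow_natCast, ← Real.rpow_add hr0]; congr 1; push_cast; ring
    rw [h2]
    gcongr
    exact (min_le_left _ _).trans (by nlinarith [sq_nonneg r])
  · have h1 : IntegrableOn (fun r : ℝ => 2 * r ^ (-1 - α)) (Set.Ioi 1) :=
      (integrableOn_Ioi_rpow_of_lt (by linarith) one_pos).const_mul 2
    refine Integrable.mono' h1 hmeas.aestronglyMeasurable ?_
    refine (ae_restrict_iff' measurableSet_Ioi).2 (.of_forall fun r hr => ?_)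
    have hr0 : 0 < r := one_pos.trans hr
    have : r ^ (d - 1) • (min (r ^ 2 / 2) 2 * r ^ (-(d : ℝ) - α))
        = min (r ^ 2 / 2) 2 * r ^ (-1 - α) := by
      rw [← key r hr0, smul_eq_mul]; ring
    rw [this, Real.norm_of_nonneg (by positivity)]
    gcongr
    exact min_le_right _ _

lemma aux_integrable (d : ℕ) (hd : 2 ≤ d) (α : ℝ) (hα : 0 < α) (hα2 : α < 2)
    (e : EuclideanSpace ℝ (Fin d)) (he : ‖e‖ = 1) :
    Integrable (fun x : EuclideanSpace ℝ (Fin d) =>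
      (1 - Real.cos (inner ℝ e x)) * ‖x‖ ^ (-(d : ℝ) - α)) volume := by
  refine Integrable.mono' (aux_radial d hd α hα hα2) ?_ (.of_forall fun x => ?_)
  · exact Measurable.aestronglyMeasurable (by fun_prop)
  · have h0 : 0 ≤ 1 - Real.cos (inner ℝ e x) := by linarith [Real.cos_le_one (inner ℝ e x)]
    rw [Real.norm_of_nonneg (by positivity)]
    show _ ≤ min (‖x‖ ^ 2 / 2) 2 * ‖x‖ ^ (-(d : ℝ) - α)
    gcongr
    refine le_min ?_ (by linarith [Real.neg_one_le_cos (inner ℝ e x)])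
    have h1 := Real.one_sub_sq_div_two_le_cos (x := inner ℝ e x)
    have h2 : |inner ℝ e x| ≤ ‖x‖ := by
      simpa [he] using abs_real_inner_le_norm e x
    have h3 := sq_le_sq' (abs_le.1 h2).1 (abs_le.1 h2).2
    linarith

lemma aux_rot (d : ℕ) (α : ℝ) (e e' : EuclideanSpace ℝ (Fin d)) (h : ‖e‖ = ‖e'‖) (R : ℝ) :
    ∫ x in Metric.ball (0 : EuclideanSpace ℝ (Fin d)) R,
      (1 - Real.cos (inner ℝ e x)) * ‖x‖ ^ (-(d : ℝ) - α) =
    ∫ x in Metric.ball (0 : EuclideanSpace ℝ (Fin d)) R,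
      (1 - Real.cos (inner ℝ e' x)) * ‖x‖ ^ (-(d : ℝ) - α) := by
  let L := (ℝ ∙ (e - e'))ᗮ.reflection
  have hL : L e = e' := Submodule.reflection_sub h
  have := L.measurePreserving.setIntegral_preimage_emb L.toHomeomorph.measurableEmbedding
    (fun x => (1 - Real.cos (inner ℝ e' x)) * ‖x‖ ^ (-(d : ℝ) - α)) (Metric.ball 0 R)
  rw [← this]
  have hpre : L ⁻¹' (Metric.ball 0 R) = Metric.ball 0 R := by
    ext x; simp
  rw [hpre]
  congr 1
  ext x
  rw [← hL, L.inner_map_map, L.norm_map]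

lemma aux_scale (d : ℕ) (α : ℝ) (ξ : EuclideanSpace ℝ (Fin d)) (h : 0 < ‖ξ‖) :
    (∫ y in Metric.ball (0 : EuclideanSpace ℝ (Fin d)) 1,
      (1 - Real.cos (inner ℝ ξ y)) * ‖y‖ ^ (-(d : ℝ) - α)) / ‖ξ‖ ^ α =
    ∫ x in Metric.ball (0 : EuclideanSpace ℝ (Fin d)) ‖ξ‖,
      (1 - Real.cos (inner ℝ (‖ξ‖⁻¹ • ξ) x)) * ‖x‖ ^ (-(d : ℝ) - α) := by
  set r := ‖ξ‖ with hr
  have := Measure.setIntegral_comp_smul_of_pos (volume : Measure (EuclideanSpace ℝ (Fin d)))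
    (fun x => (1 - Real.cos (inner ℝ (r⁻¹ • ξ) x)) * ‖x‖ ^ (-(d : ℝ) - α)) (Metric.ball 0 1) h
  rw [smul_unitBall_of_pos h, finrank_euclideanSpace_fin, smul_eq_mul] at this
  have h2 : ∀ x : EuclideanSpace ℝ (Fin d),
      (1 - Real.cos (inner ℝ (r⁻¹ • ξ) (r • x))) * ‖r • x‖ ^ (-(d : ℝ) - α) =
      r ^ (-(d : ℝ) - α) * ((1 - Real.cos (inner ℝ ξ x)) * ‖x‖ ^ (-(d : ℝ) - α)) := by
    intro x
    rw [real_inner_smul_left, real_inner_smul_right, inv_mul_cancel_left₀ h.ne', norm_smul,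
      Real.norm_of_nonneg h.le, Real.mul_rpow h.le (norm_nonneg _)]
    ring
  simp_rw [h2] at this
  rw [integral_const_mul, Real.rpow_sub h, Real.rpow_neg h.le, Real.rpow_natCast] at this
  have hd : r ^ d ≠ 0 := by positivity
  have hα : r ^ α ≠ 0 := by positivity
  field_simp at this ⊢
  linarith

/-- for every unit vector `e`, the integral
`I = ∫_{ℝ^d} (1 - cos(e·x)) |x|^{-d-α} dx` is finite, strictly positive and
independent of `e`; moreover `ψ(ξ)/|ξ|^α → A(d,-α)·I` as `|ξ| → ∞`. -/
theorem statement4 (d : ℕ) (hd : 2 ≤ d) (α : ℝ) (hα : 0 < α) (hα2 : α < 2) :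
    ∃ I : ℝ, 0 < I ∧
      (∀ e : EuclideanSpace ℝ (Fin d), ‖e‖ = 1 →
        Integrable (fun x : EuclideanSpace ℝ (Fin d) =>
          (1 - Real.cos (inner ℝ e x)) * ‖x‖ ^ (-(d : ℝ) - α)) volume ∧
        (∫ x : EuclideanSpace ℝ (Fin d),
          (1 - Real.cos (inner ℝ e x)) * ‖x‖ ^ (-(d : ℝ) - α)) = I) ∧
      Filter.Tendsto (fun ξ : EuclideanSpace ℝ (Fin d) => truncPsi d α ξ / ‖ξ‖ ^ α)
        (Filter.comap (fun ξ : EuclideanSpace ℝ (Fin d) => ‖ξ‖) Filter.atTop)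
        (nhds (stableA d α * I)) := by
  obtain ⟨e₀, he₀⟩ : ∃ e : EuclideanSpace ℝ (Fin d), ‖e‖ = 1 :=
    ⟨EuclideanSpace.single ⟨0, by omega⟩ 1, by simp⟩
  have lim : ∀ e : EuclideanSpace ℝ (Fin d), ‖e‖ = 1 →
      Filter.Tendsto (fun R : ℝ => ∫ x in Metric.ball (0 : EuclideanSpace ℝ (Fin d)) R,
        (1 - Real.cos (inner ℝ e x)) * ‖x‖ ^ (-(d : ℝ) - α)) Filter.atTop
        (nhds (∫ x : EuclideanSpace ℝ (Fin d),
          (1 - Real.cos (inner ℝ e x)) * ‖x‖ ^ (-(d : ℝ) - α))) := fun e he =>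
    (aecover_ball Filter.tendsto_id).integral_tendsto_of_countably_generated
      (aux_integrable d hd α hα hα2 e he)
  refine ⟨∫ x : EuclideanSpace ℝ (Fin d),
          (1 - Real.cos (inner ℝ e₀ x)) * ‖x‖ ^ (-(d : ℝ) - α), ?_, fun e he =>
    ⟨aux_integrable d hd α hα hα2 e he, ?_⟩, ?_⟩
  · rw [integral_pos_iff_support_of_nonneg _ (aux_integrable d hd α hα hα2 e₀ he₀)]
    · have hopen : IsOpen {x : EuclideanSpace ℝ (Fin d) | inner ℝ e₀ x ∈ Set.Ioo 0 (2 * Real.pi)} :=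
        isOpen_Ioo.preimage (by fun_prop)
      refine (hopen.measure_pos volume ⟨e₀, ?_⟩).trans_le (measure_mono fun x hx => ?_)
      · simp only [Set.mem_ofPred_eq, real_inner_self_eq_norm_sq, he₀]
        constructor <;> nlinarith [Real.pi_gt_three]
      · have hx0 : x ≠ 0 := by
          rintro rfl
          simp at hx
        have hxp : 0 < ‖x‖ := norm_pos_iff.2 hx0
        have hc : Real.cos (inner ℝ e₀ x) ≠ 1 := by
          intro hc
          rw [Real.cos_eq_one_iff_of_lt_of_lt (by linarith [hx.1, Real.pi_pos]) hx.2] at hc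
          exact hx.1.ne' hc
        exact mul_ne_zero (sub_ne_zero.2 hc.symm) (by positivity)
    · intro x
      have h0 : 0 ≤ 1 - Real.cos (inner ℝ e₀ x) := by linarith [Real.cos_le_one (inner ℝ e₀ x)]
      show 0 ≤ (1 - Real.cos (inner ℝ e₀ x)) * ‖x‖ ^ (-(d : ℝ) - α)
      positivity
  · refine tendsto_nhds_unique (lim e he) ((lim e₀ he₀).congr fun R => ?_)
    exact aux_rot d α e₀ e (he₀.trans he.symm) R
  · have h1 := ((lim e₀ he₀).const_mul (stableA d α)).comp
      (Filter.tendsto_comap (f := fun ξ : EuclideanSpace ℝ (Fin d) => ‖ξ‖) (x := Filter.atTop))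
    refine h1.congr' ?_
    have hev : ∀ᶠ ξ : EuclideanSpace ℝ (Fin d) in
        Filter.comap (fun ξ : EuclideanSpace ℝ (Fin d) => ‖ξ‖) Filter.atTop, 0 < ‖ξ‖ :=
      Filter.tendsto_comap.eventually (Filter.eventually_gt_atTop 0)
    filter_upwards [hev] with ξ hξ
    have hu : ‖‖ξ‖⁻¹ • ξ‖ = 1 := by
      rw [norm_smul, norm_inv, norm_norm, inv_mul_cancel₀ hξ.ne']
    simp only [Function.comp]
    rw [truncPsi, mul_div_assoc, aux_scale d α ξ hξ, aux_rot d α _ _ (he₀.trans hu.symm)]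
end
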